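/- Let λ > 0 and m, x ∈ ℝ. Then ∫_0^∞ (2πw)^{−1/2} e^{−(x − m)²/(2w)} · (λ²/2) e^{−λ²w/2} dw = (λ/2) e^{−λ|x − m|}. That is, the Laplace distribution with location m and scale 1/λ is a scale mixture of Normal distributions with mean m, where the variance w follows an Exponential distribution with rate λ²/2. -/

import Mathlib

open MeasureTheory

lemma aux_cs (l a : ℝ) (hl : 0 < l) (ha : 0 < a) :
    ∫ t in Set.Ioi (0 : ℝ), Real.exp (-(1/2) * (l * t - a / t) ^ 2) = √(2 * Real.pi) / (2 * l) := by
  set f : ℝ → ℝ := fun t => Real.exp (-(1/2) * (l * t - a / t) ^ 2) with hf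
  have hd : ∀ t ∈ Set.Ioi (0:ℝ), HasDerivWithinAt (fun t => l * t - a / t) (l + a / t ^ 2)
      (Set.Ioi 0) t := by
    intro t ht
    have ht' : t ≠ 0 := ne_of_gt ht
    have h1 := ((hasDerivAt_id t).const_mul l).sub ((hasDerivAt_inv ht').const_mul a)
    refine (h1.congr_deriv ?_).hasDerivWithinAt.congr_of_eventuallyEq ?_ ?_
    · field_simp; ring
    · exact Filter.Eventually.of_forall fun y => by simp [div_eq_mul_inv]
    · simp [div_eq_mul_inv]
  have hinj : Set.InjOn (fun t => l * t - a / t) (Set.Ioi 0) := by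
    intro s hs t ht h
    simp only [Set.mem_Ioi] at hs ht
    simp only at h
    have h2 : (s - t) * (l * s * t + a) = 0 := by
      field_simp at h
      linarith
    have h3 : l * s * t + a ≠ 0 := by positivity
    have := (mul_eq_zero.mp h2).resolve_right h3
    linarith
  have himg : (fun t => l * t - a / t) '' (Set.Ioi 0) = Set.univ := by
    refine Set.eq_univ_of_forall fun u => ?_
    have hq : 0 < u ^ 2 + 4 * a * l := by positivity
    have hs : √(u ^ 2 + 4 * a * l) ^ 2 = u ^ 2 + 4 * a * l := Real.sq_sqrt hq.le
    have hpos : 0 < u + √(u ^ 2 + 4 * a * l) := by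
      have : |u| < √(u ^ 2 + 4 * a * l) := by
        apply Real.lt_sqrt_of_sq_lt
        rw [sq_abs]
        have : 0 < a * l := by positivity
        linarith
      linarith [neg_abs_le u]
    refine ⟨(u + √(u ^ 2 + 4 * a * l)) / (2 * l), ?_, ?_⟩
    · simp only [Set.mem_Ioi]; positivity
    · simp only
      generalize √(u ^ 2 + 4 * a * l) = r at *
      field_simp
      linarith
  have hG : Integrable (fun u : ℝ => Real.exp (-(1/2) * u ^ 2)) :=
    integrable_exp_neg_mul_sq (by norm_num)
  have habs : ∀ t ∈ Set.Ioi (0:ℝ), |l + a / t ^ 2| • Real.exp (-(1/2) * (l * t - a / t) ^ 2)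
      = (l + a / t ^ 2) * f t := by
    intro t ht
    simp only [Set.mem_Ioi] at ht
    rw [abs_of_pos (by positivity), smul_eq_mul]
  have hI1 : IntegrableOn (fun t => (l + a / t ^ 2) * f t) (Set.Ioi 0) := by
    have := (integrableOn_image_iff_integrableOn_abs_deriv_smul measurableSet_Ioi hd hinj
      (fun u : ℝ => Real.exp (-(1/2) * u ^ 2))).1 (by rw [himg]; exact hG.integrableOn)
    exact (integrableOn_congr_fun habs measurableSet_Ioi).1 this
  have hE1 : ∫ t in Set.Ioi (0:ℝ), (l + a / t ^ 2) * f t = √(2 * Real.pi) := by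
    have := integral_image_eq_integral_abs_deriv_smul measurableSet_Ioi hd hinj
      (fun u : ℝ => Real.exp (-(1/2) * u ^ 2))
    rw [himg, setIntegral_congr_fun measurableSet_Ioi habs, Measure.restrict_univ,
      integral_gaussian] at this
    rw [← this]; congr 1; ring
  have hmeas : Measurable f := by simp only [hf]; fun_prop
  have hI2 : IntegrableOn (fun t => l * f t) (Set.Ioi 0) := by
    refine Integrable.mono' hI1 (by fun_prop) ?_
    refine (ae_restrict_mem measurableSet_Ioi).mono fun t ht => ?_
    simp only [Set.mem_Ioi] at ht
    have hp : 0 < f t := Real.exp_pos _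
    rw [Real.norm_of_nonneg (by positivity)]
    have : 0 < a / t ^ 2 := by positivity
    nlinarith
  have hI3 : IntegrableOn (fun t => a / t ^ 2 * f t) (Set.Ioi 0) := by
    refine (hI1.sub hI2).congr (Filter.Eventually.of_forall fun t => ?_)
    simp only [Pi.sub_apply]; ring
  have hE2 : ∫ t in Set.Ioi (0:ℝ), f t = ∫ t in Set.Ioi (0:ℝ), (a / t ^ 2 * f t) / l := by
    have hd2 : ∀ t ∈ Set.Ioi (0:ℝ), HasDerivWithinAt (fun t => a / l * t⁻¹) (a / l * (-(t^2)⁻¹))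
      (Set.Ioi 0) t := fun t ht =>
        ((hasDerivAt_inv (ne_of_gt ht)).const_mul (a / l)).hasDerivWithinAt
    have hinj2 : Set.InjOn (fun t => a / l * t⁻¹) (Set.Ioi 0) := by
      intro s hs t ht h
      have : a / l ≠ 0 := by positivity
      simpa [this, ha.ne', hl.ne'] using h
    have himg2 : (fun t => a / l * t⁻¹) '' (Set.Ioi 0) = Set.Ioi 0 := by
      ext u
      constructor
      · rintro ⟨t, ht, rfl⟩
        simp only [Set.mem_Ioi] at *
        positivity
      · intro hu
        simp only [Set.mem_Ioi] at hu
        refine ⟨a / l * u⁻¹, ?_, ?_⟩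
        · simp only [Set.mem_Ioi]; positivity
        · simp only; field_simp
    have := integral_image_eq_integral_abs_deriv_smul measurableSet_Ioi hd2 hinj2 f
    rw [himg2] at this
    rw [this]
    refine setIntegral_congr_fun measurableSet_Ioi fun t ht => ?_
    simp only [Set.mem_Ioi] at ht
    have e : f (a / l * t⁻¹) = f t := by
      simp only [hf]
      congr 2
      field_simp
      ring
    simp only [smul_eq_mul]
    rw [e, mul_neg, abs_neg, abs_of_pos (by positivity)]
    field_simp
  rw [integral_div] at hE2
  have hsum : ∫ t in Set.Ioi (0:ℝ), (l + a / t ^ 2) * f t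
      = l * (∫ t in Set.Ioi (0:ℝ), f t) + ∫ t in Set.Ioi (0:ℝ), a / t ^ 2 * f t := by
    rw [← integral_const_mul, ← integral_add hI2 hI3]
    congr 1; ext t; ring
  rw [hE1] at hsum
  rw [eq_div_iff hl.ne'] at hE2
  rw [eq_div_iff (by positivity)]
  linarith

lemma aux_cs0 (l a : ℝ) (hl : 0 < l) (ha : 0 ≤ a) :
    ∫ t in Set.Ioi (0 : ℝ), Real.exp (-(1/2) * (l * t - a / t) ^ 2) = √(2 * Real.pi) / (2 * l) := by
  rcases ha.lt_or_eq with h | h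
  · exact aux_cs l a hl h
  · subst h
    have := integral_gaussian_Ioi (l ^ 2 / 2)
    have e : Real.pi / (l ^ 2 / 2) = (2 * Real.pi) / l ^ 2 := by field_simp
    rw [e, Real.sqrt_div (by positivity), Real.sqrt_sq hl.le] at this
    rw [mul_comm 2 l, ← div_div, ← this]
    congr 1; ext t; congr 1; ring

theorem stmt_12 (lam m x : ℝ) (hlam : 0 < lam) :
    ∫ w in Set.Ioi (0 : ℝ),
        (2 * Real.pi * w) ^ (-(1 : ℝ) / 2) * Real.exp (-(x - m) ^ 2 / (2 * w)) *
          ((lam ^ 2 / 2) * Real.exp (-(lam ^ 2 * w) / 2))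
      = (lam / 2) * Real.exp (-lam * |x - m|) := by
  have hd : ∀ t ∈ Set.Ioi (0:ℝ), HasDerivWithinAt (fun t : ℝ => t ^ 2) (2 * t)
      (Set.Ioi 0) t := fun t ht => by
    simpa using (hasDerivAt_pow 2 t).hasDerivWithinAt
  have hinj : Set.InjOn (fun t : ℝ => t ^ 2) (Set.Ioi 0) := by
    intro s hs t ht h
    exact (pow_left_inj₀ (le_of_lt hs) (le_of_lt ht) two_ne_zero).1 h
  have himg : (fun t : ℝ => t ^ 2) '' (Set.Ioi 0) = Set.Ioi 0 := by
    ext u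
    constructor
    · rintro ⟨t, ht, rfl⟩
      simp only [Set.mem_Ioi] at *
      positivity
    · intro hu
      exact ⟨√u, Real.sqrt_pos.2 hu, Real.sq_sqrt (le_of_lt hu)⟩
  rw [← himg, integral_image_eq_integral_abs_deriv_smul measurableSet_Ioi hd hinj]
  have key : ∀ t ∈ Set.Ioi (0:ℝ), |2 * t| • ((2 * Real.pi * t ^ 2) ^ (-(1 : ℝ) / 2) *
      Real.exp (-(x - m) ^ 2 / (2 * t ^ 2)) *
          ((lam ^ 2 / 2) * Real.exp (-(lam ^ 2 * t ^ 2) / 2)))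
      = (lam ^ 2 / √(2 * Real.pi) * Real.exp (-lam * |x - m|)) *
        Real.exp (-(1/2) * (lam * t - |x - m| / t) ^ 2) := by
    intro t ht
    simp only [Set.mem_Ioi] at ht
    have h1 : (2 * Real.pi * t ^ 2) ^ (-(1 : ℝ) / 2) = (√(2 * Real.pi))⁻¹ * t⁻¹ := by
      rw [neg_div, Real.rpow_neg (by positivity), ← Real.sqrt_eq_rpow,
        Real.sqrt_mul (by positivity), Real.sqrt_sq ht.le, mul_inv]
    have h2 : Real.exp (-(x - m) ^ 2 / (2 * t ^ 2)) * Real.exp (-(lam ^ 2 * t ^ 2) / 2)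
        = Real.exp (-lam * |x - m|) * Real.exp (-(1/2) * (lam * t - |x - m| / t) ^ 2) := by
      rw [← Real.exp_add, ← Real.exp_add, ← sq_abs (x - m)]
      congr 1
      field_simp
      ring
    rw [h1, abs_of_pos (by positivity), smul_eq_mul, mul_assoc (lam ^ 2 / _), ← h2]
    field_simp
  rw [setIntegral_congr_fun measurableSet_Ioi key, integral_const_mul,
    aux_cs0 _ _ hlam (abs_nonneg _)]
  have : √(2 * Real.pi) ≠ 0 := by positivity
  field_simp
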